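/- For each i ∈ {0,…,N−1}, the matrix A_i is invertible and satisfies E(A_i^{−1} v) ≤ (N+2)² E(v) for every v ∈ ℝ^N, and moreover there exists v ∈ ℝ^N with E(v) ≠ 0 and E(A_i^{−1} v) = (N+2)² E(v); that is, the E-operator norm of A_i^{−1} equals exactly N+2. -/

import Mathlib

open Matrix Filter

/-- The harmonic extension matrix `A_i` for `SG_N`. -/
noncomputable def harmA (N : ℕ) (i : Fin N) : Matrix (Fin N) (Fin N) ℝ :=
  Matrix.of fun j k =>
    if j = i then (if k = i then 1 else 0)
    else if k = i then 2 / (N + 2)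
    else (1 + if j = k then 1 else 0) / (N + 2)

/-- The energy bilinear form `E(u,v) = ∑_{k<l} (u_k - u_l)(v_k - v_l)` on `ℝ^N`. -/
noncomputable def energy (N : ℕ) (u v : Fin N → ℝ) : ℝ :=
  ∑ k : Fin N, ∑ l : Fin N, if k < l then (u k - u l) * (v k - v l) else 0

/-!
The energy of `u` changes by `2 t ∂ᵢu + (N - 1) t²` when `t` is added to its value at `i`, where
`∂ᵢu = ∑ₖ (uᵢ - uₖ)`, and it does not see constants. Modulo constants, `(N + 2) Aᵢ u` is `u` with
`∂ᵢu` added at `i`, so `(N + 2)² E(Aᵢ u) = E(u) + (N + 1) (∂ᵢu)²`. Hence a vector in the kernel of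
`Aᵢ` has zero energy, so it is constant, and it vanishes because `Aᵢ` preserves the value at `i`.
Also `E(u) ≤ (N + 2)² E(Aᵢ u)`, with equality exactly on the hyperplane `∂ᵢu = 0`, which contains
nonconstant vectors once there are two vertices other than `i`.
-/

section Energy

variable {N : ℕ}

/-- The discrete normal derivative `∂ᵢu = ∑ₖ (uᵢ - uₖ)` of a function on the vertices of the
complete graph, as a linear functional of `u`. It is the energy pairing with the `i`-th basis
vector; its sign is the outward one, positive at a strict maximum. -/
noncomputable def normalDeriv (i : Fin N) : (Fin N → ℝ) →ₗ[ℝ] ℝ where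
  toFun u := ∑ k, (u i - u k)
  map_add' u v := by simp only [Pi.add_apply, add_sub_add_comm, Finset.sum_add_distrib]
  map_smul' c u := by simp only [Pi.smul_apply, ← smul_sub, Finset.smul_sum, RingHom.id_apply]

lemma normalDeriv_apply (i : Fin N) (u : Fin N → ℝ) :
    normalDeriv i u = N * u i - ∑ k, u k := by
  simp [normalDeriv]

lemma normalDeriv_const (i : Fin N) (c : ℝ) : normalDeriv i (Function.const _ c) = 0 := by
  simp [normalDeriv_apply]

lemma normalDeriv_single_self (i : Fin N) (t : ℝ) :
    normalDeriv i (Pi.single i t) = (N - 1) * t := by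
  simp [normalDeriv_apply, sub_mul]

lemma energy_comm (u v : Fin N → ℝ) : energy N u v = energy N v u := by
  simp only [energy, mul_comm]

lemma energy_self_nonneg (u : Fin N → ℝ) : 0 ≤ energy N u u :=
  Fintype.sum_nonneg fun _ => Fintype.sum_nonneg fun _ =>
    ite_nonneg (mul_self_nonneg _) le_rfl

lemma eq_of_energy_self_eq_zero {u : Fin N → ℝ} (hu : energy N u u = 0) (k l : Fin N) :
    u k = u l := by
  have term_nonneg (k l : Fin N) : 0 ≤ if k < l then (u k - u l) * (u k - u l) else 0 :=
    ite_nonneg (mul_self_nonneg _) le_rfl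
  have eq_of_lt {k l : Fin N} (hkl : k < l) : u k = u l := by
    have hk := (Fintype.sum_eq_zero_iff_of_nonneg
      fun k => Fintype.sum_nonneg (term_nonneg k)).1 hu
    have hl := congrFun ((Fintype.sum_eq_zero_iff_of_nonneg (term_nonneg k)).1 (congrFun hk k)) l
    simpa [hkl, sub_eq_zero] using hl
  rcases lt_trichotomy k l with hkl | rfl | hlk
  · exact eq_of_lt hkl
  · rfl
  · exact (eq_of_lt hlk).symm

lemma energy_eq_sum_mul_normalDeriv (u v : Fin N → ℝ) :
    energy N u v = ∑ k, u k * normalDeriv k v := by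
  have hswap : ∑ k, ∑ l, (if k < l then u l * (v l - v k) else 0) =
      ∑ k, ∑ l, if l < k then u k * (v k - v l) else 0 := Finset.sum_comm
  calc energy N u v
      = (∑ k, ∑ l, if k < l then u k * (v k - v l) else 0) +
          ∑ k, ∑ l, if k < l then u l * (v l - v k) else 0 := by
        simp only [energy, ← Finset.sum_add_distrib]
        refine Finset.sum_congr rfl fun k _ => Finset.sum_congr rfl fun l _ => ?_
        split_ifs <;> ring
    _ = ∑ k, ∑ l, u k * (v k - v l) := by
        simp only [hswap, ← Finset.sum_add_distrib]
        refine Finset.sum_congr rfl fun k _ => Finset.sum_congr rfl fun l _ => ?_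
        rcases lt_trichotomy k l with h | rfl | h <;> simp [*, not_lt_of_gt]
    _ = ∑ k, u k * normalDeriv k v := by simp only [← Finset.mul_sum]; rfl

lemma energy_add_left (u v w : Fin N → ℝ) :
    energy N (u + v) w = energy N u w + energy N v w := by
  simp only [energy_eq_sum_mul_normalDeriv, Pi.add_apply, add_mul, Finset.sum_add_distrib]

lemma energy_add_right (u v w : Fin N → ℝ) :
    energy N u (v + w) = energy N u v + energy N u w := by
  simp only [energy_comm u, energy_add_left]

lemma energy_smul_smul (a b : ℝ) (u v : Fin N → ℝ) :
    energy N (a • u) (b • v) = a * b * energy N u v := by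
  simp only [energy_eq_sum_mul_normalDeriv, map_smul, Pi.smul_apply, smul_eq_mul, Finset.mul_sum]
  exact Finset.sum_congr rfl fun k _ => by ring

lemma energy_const_left (c : ℝ) (v : Fin N → ℝ) : energy N (Function.const _ c) v = 0 := by
  simp [energy]

lemma energy_const_right (u : Fin N → ℝ) (c : ℝ) : energy N u (Function.const _ c) = 0 := by
  rw [energy_comm, energy_const_left]

lemma energy_single_left (i : Fin N) (t : ℝ) (v : Fin N → ℝ) :
    energy N (Pi.single i t) v = t * normalDeriv i v := by
  simp [energy_eq_sum_mul_normalDeriv, Pi.single_apply]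

lemma energy_single_right (u : Fin N → ℝ) (i : Fin N) (t : ℝ) :
    energy N u (Pi.single i t) = t * normalDeriv i u := by
  rw [energy_comm, energy_single_left]

lemma exists_normalDeriv_eq_zero_and_energy_ne_zero (hN : 3 ≤ N) (i : Fin N) :
    ∃ u : Fin N → ℝ, normalDeriv i u = 0 ∧ energy N u u ≠ 0 := by
  obtain ⟨a, hai, -⟩ := Fin.exists_ne_and_ne_of_two_lt i i hN
  obtain ⟨b, hbi, hba⟩ := Fin.exists_ne_and_ne_of_two_lt i a hN
  refine ⟨Pi.single a 1 - Pi.single b 1, ?_, fun hE => ?_⟩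
  · simp [normalDeriv_apply, hai.symm, hbi.symm]
  · simpa [hai.symm, hbi.symm, hba.symm] using eq_of_energy_self_eq_zero hE a i

end Energy

section HarmonicExtension

variable {N : ℕ} (i : Fin N)

lemma harmA_mulVec_self (u : Fin N → ℝ) : (harmA N i *ᵥ u) i = u i := by
  simp [harmA, mulVec, dotProduct]

lemma smul_harmA_mulVec (u : Fin N → ℝ) :
    ((N : ℝ) + 2) • (harmA N i *ᵥ u) =
      u + Function.const _ (u i + ∑ k, u k) + Pi.single i (normalDeriv i u) := by
  have hN : (N : ℝ) + 2 ≠ 0 := by positivity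
  ext j
  rcases eq_or_ne j i with rfl | hji
  · simp only [Pi.smul_apply, smul_eq_mul, harmA_mulVec_self, normalDeriv_apply, Pi.add_apply,
      Function.const_apply, Pi.single_eq_same]
    ring
  · have entry (k : Fin N) : ((N : ℝ) + 2) * (harmA N i j k * u k) =
        (if j = k then u k else 0) + (if i = k then u k else 0) + u k := by
      rcases eq_or_ne i k with rfl | hik
      · simp only [harmA, of_apply, hji, ↓reduceIte, zero_add]
        field_simp
        ring
      · simp only [harmA, of_apply, hji, hik, hik.symm, ↓reduceIte, add_zero]
        split_ifs <;> field_simp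
        ring
    simp [mulVec, dotProduct, Finset.mul_sum, entry, Finset.sum_add_distrib, hji, add_assoc]

lemma energy_harmA_mulVec (u v : Fin N → ℝ) :
    ((N : ℝ) + 2) ^ 2 * energy N (harmA N i *ᵥ u) (harmA N i *ᵥ v) =
      energy N u v + (N + 1) * (normalDeriv i u * normalDeriv i v) := by
  rw [sq, ← energy_smul_smul, smul_harmA_mulVec, smul_harmA_mulVec]
  simp only [energy_add_left, energy_add_right, energy_const_left, energy_const_right,
    energy_single_left, energy_single_right, map_add, normalDeriv_const,
    normalDeriv_single_self]
  ring

lemma energy_self_le_sq_mul_energy_harmA_mulVec (u : Fin N → ℝ) :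
    energy N u u ≤ ((N : ℝ) + 2) ^ 2 * energy N (harmA N i *ᵥ u) (harmA N i *ᵥ u) := by
  rw [energy_harmA_mulVec]
  exact le_add_of_nonneg_right (mul_nonneg (by positivity) (mul_self_nonneg _))

lemma isUnit_harmA : IsUnit (harmA N i) := by
  rw [← mulVec_injective_iff_isUnit]
  refine (injective_iff_map_eq_zero (harmA N i).mulVecLin).2 fun u (hu : harmA N i *ᵥ u = 0) => ?_
  have hui : u i = 0 := by rw [← harmA_mulVec_self i u, hu, Pi.zero_apply]
  have hE : energy N u u = 0 := by
    have hE0 : energy N 0 0 = 0 := energy_const_left 0 0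
    refine le_antisymm ?_ (energy_self_nonneg u)
    simpa only [hu, hE0, mul_zero] using energy_self_le_sq_mul_energy_harmA_mulVec i u
  exact funext fun j => (eq_of_energy_self_eq_zero hE j i).trans hui

end HarmonicExtension

theorem energy_opNorm_of_inv_harmA (N : ℕ) (hN : 3 ≤ N) (i : Fin N) :
    IsUnit (harmA N i) ∧
    (∀ v : Fin N → ℝ,
      energy N ((harmA N i)⁻¹.mulVec v) ((harmA N i)⁻¹.mulVec v) ≤
        ((N : ℝ) + 2) ^ 2 * energy N v v) ∧
    ∃ v : Fin N → ℝ, energy N v v ≠ 0 ∧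
      energy N ((harmA N i)⁻¹.mulVec v) ((harmA N i)⁻¹.mulVec v) =
        ((N : ℝ) + 2) ^ 2 * energy N v v := by
  have hdet := (isUnit_iff_isUnit_det _).1 (isUnit_harmA i)
  refine ⟨isUnit_harmA i, fun v => ?_, ?_⟩
  · have hle := energy_self_le_sq_mul_energy_harmA_mulVec i ((harmA N i)⁻¹ *ᵥ v)
    rwa [mulVec_mulVec v, mul_nonsing_inv _ hdet, one_mulVec] at hle
  · obtain ⟨u, hu, hE⟩ := exists_normalDeriv_eq_zero_and_energy_ne_zero hN i
    have hscale : energy N u u =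
        ((N : ℝ) + 2) ^ 2 * energy N (harmA N i *ᵥ u) (harmA N i *ᵥ u) := by
      simp [energy_harmA_mulVec, hu]
    refine ⟨harmA N i *ᵥ u, right_ne_zero_of_mul (hscale ▸ hE), ?_⟩
    rwa [mulVec_mulVec, nonsing_inv_mul _ hdet, one_mulVec]
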